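/- arXiv:1710.07233 — 2 statements merged into one kernel-verified Lean document; each statement's English description precedes it below -/
import Mathlib

section
/- Let n ≥ 1, 0 < β < n, let f : ℝⁿ → ℝ be locally integrable, and let B_0 = B(z_0,r_0) ∈ ℬ_{x_0} and B_1 = B(z_1,r_1) ∈ ℬ_{x_1} be best balls (for some points x_0, x_1). Suppose that ⨍_{B_0} |f| > 0, that B(z_0, 2r_0) ∩ B(z_1, 2r_1) ≠ ∅, and that (1/4) ⨍_{B_0} |f| ≤ ⨍_{B_1} |f| ≤ 4 ⨍_{B_0} |f|. Then 8^{−(n+1)/β} ≤ r_0/r_1 ≤ 8^{(n+1)/β}. -/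
open MeasureTheory Metric Filter
open scoped Topology

noncomputable section

/-- The set of competitor values for the non-centered fractional maximal function at `x`:
values `r ^ β ⨍_{B(z,r)} |f|` over all open balls `B(z,r)` whose closure contains `x`. -/
def maxSet {n : ℕ} (β : ℝ) (f : EuclideanSpace ℝ (Fin n) → ℝ)
    (x : EuclideanSpace ℝ (Fin n)) : Set ℝ :=
  {t | ∃ z : EuclideanSpace ℝ (Fin n), ∃ r : ℝ, 0 < r ∧ x ∈ closedBall z r ∧
    t = r ^ β * ⨍ y in ball z r, |f y|}

/-- The non-centered fractional maximal function `M_β f`. -/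
def fracMax {n : ℕ} (β : ℝ) (f : EuclideanSpace ℝ (Fin n) → ℝ)
    (x : EuclideanSpace ℝ (Fin n)) : ℝ :=
  sSup (maxSet β f x)

/-- `B(z,r)` is a best ball at `x` for `M_β f`, i.e. `B(z,r) ∈ ℬ_x`. -/
def IsBestBall {n : ℕ} (β : ℝ) (f : EuclideanSpace ℝ (Fin n) → ℝ)
    (x z : EuclideanSpace ℝ (Fin n)) (r : ℝ) : Prop :=
  0 < r ∧ x ∈ closedBall z r ∧ fracMax β f x = r ^ β * ⨍ y in ball z r, |f y|

theorem avg_five {n : ℕ} (f : EuclideanSpace ℝ (Fin n) → ℝ) (hf : LocallyIntegrable f)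
    (z : EuclideanSpace ℝ (Fin n)) (r : ℝ) (hr : 0 < r) :
    (⨍ y in ball z r, |f y|) ≤ 5 ^ n * ⨍ y in ball z (5 * r), |f y| := by
  have hv : volume.real (ball z (5 * r)) = 5 ^ n * volume.real (ball z r) := by
    have h := Measure.addHaar_ball_mul_of_pos (volume : Measure (EuclideanSpace ℝ (Fin n))) z
      (r := 5) (by norm_num) r
    have h2 := Measure.addHaar_ball_center (volume : Measure (EuclideanSpace ℝ (Fin n))) z r
    simp only [Measure.real]
    rw [h, h2, ENNReal.toReal_mul, ENNReal.toReal_ofReal (by positivity)]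
    simp
  have hvp : 0 < volume.real (ball z r) :=
    ENNReal.toReal_pos (measure_ball_pos volume z hr).ne' measure_ball_lt_top.ne
  have hint : IntegrableOn (fun y => |f y|) (ball z (5 * r)) := by
    have := (hf.integrableOn_isCompact (isCompact_closedBall z (5 * r))).mono_set
      ball_subset_closedBall
    exact this.abs
  have hle : (∫ y in ball z r, |f y|) ≤ ∫ y in ball z (5 * r), |f y| := by
    apply setIntegral_mono_set hint
    · exact Eventually.of_forall fun y => abs_nonneg _
    · exact (ball_subset_ball (by linarith)).eventuallyLE
  rw [setAverage_eq, setAverage_eq, hv, smul_eq_mul, smul_eq_mul, mul_inv, ← mul_assoc,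
    ← mul_assoc, mul_inv_cancel₀ (by positivity), one_mul]
  gcongr

theorem key {n : ℕ} (β : ℝ) (hβ0 : 0 < β)
    (f : EuclideanSpace ℝ (Fin n) → ℝ) (hf : LocallyIntegrable f)
    (x₁ z₀ z₁ : EuclideanSpace ℝ (Fin n)) (r₀ r₁ : ℝ) (hr₀ : 0 < r₀)
    (hB₁ : IsBestBall β f x₁ z₁ r₁)
    (hpos : 0 < ⨍ y in ball z₀ r₀, |f y|)
    (hpos1 : 0 < ⨍ y in ball z₁ r₁, |f y|)
    (hd : dist z₁ z₀ ≤ 2 * r₀ + 2 * r₁)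
    (hhigh : (⨍ y in ball z₁ r₁, |f y|) ≤ 4 * ⨍ y in ball z₀ r₀, |f y|) :
    r₀ / r₁ ≤ (8 : ℝ) ^ (((n : ℝ) + 1) / β) := by
  obtain ⟨hr₁, hx, hM⟩ := hB₁
  rcases le_or_gt r₀ r₁ with h | h
  · exact ((div_le_one hr₁).2 h).trans (Real.one_le_rpow (by norm_num) (by positivity))
  have hbdd : BddAbove (maxSet β f x₁) := by
    by_contra hb
    have h0 : fracMax β f x₁ = 0 := Real.sSup_of_not_bddAbove hb
    have : 0 < r₁ ^ β * ⨍ y in ball z₁ r₁, |f y| := by positivity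
    linarith
  have hmem : (5 * r₀) ^ β * (⨍ y in ball z₀ (5 * r₀), |f y|) ≤ fracMax β f x₁ := by
    apply le_csSup hbdd
    refine ⟨z₀, 5 * r₀, by linarith, ?_, rfl⟩
    rw [mem_closedBall] at hx ⊢
    linarith [dist_triangle x₁ z₁ z₀]
  have h5 := avg_five f hf z₀ r₀ hr₀
  rw [hM] at hmem
  set A := ⨍ y in ball z₀ r₀, |f y|
  set B := ⨍ y in ball z₀ (5 * r₀), |f y|
  set C := ⨍ y in ball z₁ r₁, |f y|
  have hBp : 0 < B := pos_of_mul_pos_right (hpos.trans_le h5) (by positivity)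
  have h1 : r₀ ^ β ≤ (5 * r₀) ^ β := Real.rpow_le_rpow hr₀.le (by linarith) hβ0.le
  have h2 : r₀ ^ β * A ≤ (4 * 5 ^ n * r₁ ^ β) * A := by
    calc r₀ ^ β * A ≤ r₀ ^ β * (5 ^ n * B) := by gcongr
      _ ≤ 5 ^ n * ((5 * r₀) ^ β * B) := by
        rw [mul_left_comm]; gcongr
      _ ≤ 5 ^ n * (r₁ ^ β * C) := by gcongr
      _ ≤ 5 ^ n * (r₁ ^ β * (4 * A)) := by gcongr
      _ = _ := by ring
  have h3 := le_of_mul_le_mul_right h2 hpos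
  have h4 : (r₀ / r₁) ^ β ≤ (8 : ℝ) ^ ((n : ℝ) + 1) := by
    rw [Real.div_rpow hr₀.le hr₁.le, div_le_iff₀ (by positivity)]
    refine h3.trans ?_
    gcongr
    rw [Real.rpow_add_one (by norm_num), Real.rpow_natCast, mul_comm]
    gcongr <;> norm_num
  rw [div_eq_mul_inv ((n : ℝ) + 1), Real.rpow_mul (by norm_num)]
  exact (Real.le_rpow_inv_iff_of_pos (by positivity) (by positivity) hβ0).2 h4

theorem stmt16 (n : ℕ) (hn : 1 ≤ n) (β : ℝ) (hβ0 : 0 < β) (hβn : β < n)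
    (f : EuclideanSpace ℝ (Fin n) → ℝ) (hf : LocallyIntegrable f)
    (x₀ x₁ z₀ z₁ : EuclideanSpace ℝ (Fin n)) (r₀ r₁ : ℝ)
    (hB₀ : IsBestBall β f x₀ z₀ r₀) (hB₁ : IsBestBall β f x₁ z₁ r₁)
    (hpos : 0 < ⨍ y in ball z₀ r₀, |f y|)
    (hmeet : (ball z₀ (2 * r₀) ∩ ball z₁ (2 * r₁)).Nonempty)
    (hlow : (1 / 4) * (⨍ y in ball z₀ r₀, |f y|) ≤ ⨍ y in ball z₁ r₁, |f y|)
    (hhigh : (⨍ y in ball z₁ r₁, |f y|) ≤ 4 * ⨍ y in ball z₀ r₀, |f y|) :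
    (8 : ℝ) ^ (-((n : ℝ) + 1) / β) ≤ r₀ / r₁ ∧
      r₀ / r₁ ≤ (8 : ℝ) ^ (((n : ℝ) + 1) / β) := by
  obtain ⟨w, hw0, hw1⟩ := hmeet
  rw [mem_ball] at hw0 hw1
  have hd : dist z₁ z₀ ≤ 2 * r₀ + 2 * r₁ := by
    linarith [dist_triangle_left z₁ z₀ w]
  have hpos1 : 0 < ⨍ y in ball z₁ r₁, |f y| := by linarith
  refine ⟨?_, key β hβ0 f hf x₁ z₀ z₁ r₀ r₁ hB₀.1 hB₁ hpos hpos1 hd hhigh⟩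
  have h := key β hβ0 f hf x₀ z₁ z₀ r₁ r₀ hB₁.1 hB₀ hpos1 hpos
    (by rw [dist_comm]; linarith) (by linarith)
  rw [neg_div, Real.rpow_neg (by norm_num), ← inv_div r₁ r₀]
  exact inv_anti₀ (div_pos hB₁.1 hB₀.1) h
end
end

section
/- Let n ≥ 1, 0 ≤ β < n, let f : ℝⁿ → ℝ be locally integrable, and let x ∈ ℝⁿ with M_β f(x) < ∞. If B(z_k, r_k) ∈ ℬ_x for every k ∈ ℕ and z_k → z ∈ ℝⁿ, r_k → r ∈ (0,∞) as k → ∞, then B(z,r) ∈ ℬ_x; that is, limits of best balls at x (with radii converging in (0,∞)) are best balls at x. -/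
open MeasureTheory Metric Filter
open scoped Topology

noncomputable section

theorem tendsto_setIntegral_ball_aux {n : ℕ} (g : EuclideanSpace ℝ (Fin n) → ℝ)
    (hg : LocallyIntegrable g)
    (z : ℕ → EuclideanSpace ℝ (Fin n)) (r : ℕ → ℝ)
    (zlim : EuclideanSpace ℝ (Fin n)) (rlim : ℝ)
    (hz : Tendsto z atTop (𝓝 zlim)) (hr : Tendsto r atTop (𝓝 rlim))
    (hrlim : 0 < rlim) :
    Tendsto (fun k => ∫ y in ball (z k) (r k), g y) atTop
      (𝓝 (∫ y in ball zlim rlim, g y)) := by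
  simp_rw [← integral_indicator measurableSet_ball]
  have hint : IntegrableOn g (closedBall zlim (rlim + 2)) :=
    hg.integrableOn_isCompact (isCompact_closedBall _ _)
  refine tendsto_integral_filter_of_dominated_convergence
    ((closedBall zlim (rlim + 2)).indicator (fun y => ‖g y‖)) ?_ ?_ ?_ ?_
  · exact Eventually.of_forall fun k => hg.aestronglyMeasurable.indicator measurableSet_ball
  · have h1 : ∀ᶠ k in atTop, dist (z k) zlim < 1 :=
      (Metric.tendsto_nhds.1 hz) 1 one_pos
    have h2 : ∀ᶠ k in atTop, r k < rlim + 1 := hr.eventually_lt_const (by linarith)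
    filter_upwards [h1, h2] with k hk1 hk2
    refine Eventually.of_forall fun y => ?_
    rw [norm_indicator_eq_indicator_norm]
    refine Set.indicator_le_indicator_of_subset ?_ (fun _ => norm_nonneg _) y
    intro w hw
    rw [mem_ball] at hw
    rw [mem_closedBall]
    linarith [dist_triangle w (z k) zlim]
  · exact (integrable_indicator_iff measurableSet_closedBall).2 hint.norm
  · have hs : ∀ᵐ y : EuclideanSpace ℝ (Fin n), y ∉ sphere zlim rlim :=
      measure_eq_zero_iff_ae_notMem.1 (Measure.addHaar_sphere_of_ne_zero _ _ hrlim.ne')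
    filter_upwards [hs] with y hy
    have hd : Tendsto (fun k => dist y (z k)) atTop (𝓝 (dist y zlim)) :=
      tendsto_const_nhds.dist hz
    rw [mem_sphere] at hy
    apply tendsto_const_nhds.congr'
    rcases lt_or_gt_of_ne hy with h | h
    · filter_upwards [hd.eventually_lt hr h] with k hk
      rw [Set.indicator_of_mem (mem_ball.2 h), Set.indicator_of_mem (mem_ball.2 hk)]
    · filter_upwards [hr.eventually_lt hd h] with k hk
      rw [Set.indicator_of_notMem (by rw [mem_ball]; linarith),
        Set.indicator_of_notMem (by rw [mem_ball]; linarith)]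

theorem stmt17 (n : ℕ) (hn : 1 ≤ n) (β : ℝ) (hβ0 : 0 ≤ β) (hβn : β < n)
    (f : EuclideanSpace ℝ (Fin n) → ℝ) (hf : LocallyIntegrable f)
    (x : EuclideanSpace ℝ (Fin n)) (hfin : BddAbove (maxSet β f x))
    (z : ℕ → EuclideanSpace ℝ (Fin n)) (r : ℕ → ℝ)
    (zlim : EuclideanSpace ℝ (Fin n)) (rlim : ℝ)
    (hB : ∀ k, IsBestBall β f x (z k) (r k))
    (hz : Tendsto z atTop (𝓝 zlim)) (hr : Tendsto r atTop (𝓝 rlim))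
    (hrlim : 0 < rlim) :
    IsBestBall β f x zlim rlim := by
  have hx : x ∈ closedBall zlim rlim := by
    rw [mem_closedBall]
    exact le_of_tendsto_of_tendsto' (tendsto_const_nhds.dist hz) hr
      (fun k => mem_closedBall.1 (hB k).2.1)
  refine ⟨hrlim, hx, ?_⟩
  have h1 := tendsto_setIntegral_ball_aux (fun y => |f y|) (fun y => (hf y).norm) z r zlim rlim hz hr hrlim
  have h2 := tendsto_setIntegral_ball_aux (fun _ => (1 : ℝ)) (locallyIntegrable_const 1)
    z r zlim rlim hz hr hrlim
  simp only [setIntegral_const, smul_eq_mul, mul_one] at h2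
  have hne : volume.real (ball zlim rlim) ≠ 0 :=
    (ENNReal.toReal_pos (measure_ball_pos _ _ hrlim).ne' measure_ball_lt_top.ne).ne'
  have h3 : Tendsto (fun k => r k ^ β * ⨍ y in ball (z k) (r k), |f y|) atTop
      (𝓝 (rlim ^ β * ⨍ y in ball zlim rlim, |f y|)) := by
    simp only [setAverage_eq, smul_eq_mul]
    exact (hr.rpow_const (Or.inl hrlim.ne')).mul ((h2.inv₀ hne).mul h1)
  refine tendsto_nhds_unique (tendsto_const_nhds.congr fun k => ?_) h3
  exact (hB k).2.2
end
end
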